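/- For all distinct prime numbers r, s ∉ {5, 41, 61} such that each of r and s is a quadratic residue modulo 61 and a quadratic non-residue modulo 5 and modulo 41: (12505, rs) = 0, (5, rs) ≠ 0, and (2501, rs) ≠ 0 in Br(ℚ), where 12505 = 5·41·61 and 2501 = 41·61. -/

import Mathlib

/-!
The algebra `(a, b)` over `ℚ` is governed by a ternary quadratic form.

* If `(a, b)` splits, it contains a nonzero element of square zero, which gives a nontrivial rational
  zero of `a x² + b y² - a b z²`. For `b = r c` with `r` a prime not dividing `c` and `a` a non-square
  modulo `r`, infinite descent at `r` shows that there is none (`no_zero_of_not_isSquare`).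
  Quadratic reciprocity shows that `5` and `41` are non-squares and `61` is a square modulo `r`,
  so this applies to `a = 5` and to `a = 2501 = 41 · 61`.

* Conversely, if `b = u² - a v²` then `i ↦ !![0, a; 1, 0]`, `j ↦ !![u, -a v; v, -u]` is an
  isomorphism onto the matrix algebra. For `a = 12505` and `b = r s` such `u, v` come from Legendre's
  theorem (`legendre_solution`): `12505` is a square modulo `r s` and `r s` is a square modulo
  `12505`. Legendre's theorem is proved by the pigeonhole principle on a box of triples `(x, y, z)`
  with sides `√(ab), √b, √a`, which produces a small vector on which `x² - a y² - b z²` is divisible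
  by `a b`, hence equal to `0` or to `-a b`; the second case is reduced to the first by
  multiplicativity of the norm from `ℚ(√b)`.
-/

open Quaternion

/-- Triviality of the quaternion Brauer class `(a,b)` in `Br(ℚ)`: the class `(a,b)` is
zero iff the quaternion algebra is split, i.e. isomorphic to `M₂(ℚ)`. -/
def quatSplit (a b : ℚ) : Prop :=
  Nonempty (ℍ[ℚ, a, b] ≃ₐ[ℚ] Matrix (Fin 2) (Fin 2) ℚ)

/-! ### Quaternion algebras and ternary forms -/

theorem quatSplit_of_norm {a b u v : ℚ} (ha : a ≠ 0) (hb : b ≠ 0) (h : b = u ^ 2 - a * v ^ 2) :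
    quatSplit a b := by
  let B : QuaternionAlgebra.Basis (Matrix (Fin 2) (Fin 2) ℚ) a 0 b :=
    { i := !![0, a; 1, 0]
      j := !![u, -(a * v); v, -u]
      k := !![a * v, -(a * u); u, -(a * v)]
      i_mul_i := by
        ext i j
        fin_cases i <;> fin_cases j <;> simp [Matrix.mul_apply, Fin.sum_univ_two]
      j_mul_j := by
        ext i j
        fin_cases i <;> fin_cases j <;> simp [Matrix.mul_apply, Fin.sum_univ_two, h] <;> ring
      i_mul_j := by
        ext i j
        fin_cases i <;> fin_cases j <;> simp [Matrix.mul_apply, Fin.sum_univ_two]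
      j_mul_i := by
        ext i j
        fin_cases i <;> fin_cases j <;> simp [Matrix.mul_apply, Fin.sum_univ_two] <;> ring }
  have hinj : Function.Injective B.liftHom := by
    rw [injective_iff_map_eq_zero]
    rintro ⟨w, x, y, z⟩ hq
    have hq' : B.lift ⟨w, x, y, z⟩ = 0 := hq
    have e (i j : Fin 2) := congrFun (congrFun hq' i) j
    have e00 := e 0 0
    have e01 := e 0 1
    have e10 := e 1 0
    have e11 := e 1 1
    simp [B, QuaternionAlgebra.Basis.lift, Matrix.algebraMap_matrix_apply] at e00 e01 e10 e11
    have hw : w = 0 := by linarith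
    have hx : x = 0 := by
      have : a * (2 * x) = 0 := by linear_combination e01 + a * e10
      simpa [ha] using this
    subst hw hx
    -- The remaining equations form a linear system in `y, z` of determinant `u² - a v² = b`.
    have hy : y = 0 := by
      have : b * y = 0 := by rw [h]; linear_combination u * e00 - a * v * e10
      simpa [hb] using this
    have hz : z = 0 := by
      have : b * z = 0 := by rw [h]; linear_combination u * e10 - v * e00
      simpa [hb] using this
    subst hy hz
    rfl
  have hdim : Module.finrank ℚ ℍ[ℚ, a, b] = Module.finrank ℚ (Matrix (Fin 2) (Fin 2) ℚ) := by
    rw [QuaternionAlgebra.finrank_eq_four, Module.finrank_matrix]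
    simp
  have hsurj : Function.Surjective B.liftHom :=
    (LinearMap.injective_iff_surjective_of_finrank_eq_finrank
      (f := B.liftHom.toLinearMap) hdim).1 hinj
  exact ⟨AlgEquiv.ofBijective B.liftHom ⟨hinj, hsurj⟩⟩

/-- The imaginary part of a nonzero nilpotent element is an isotropic vector. -/
theorem exists_zero_of_quatSplit {a b : ℚ} (h : quatSplit a b) :
    ∃ x y z : ℚ, ¬ (x = 0 ∧ y = 0 ∧ z = 0) ∧ a * x ^ 2 + b * y ^ 2 - a * b * z ^ 2 = 0 := by
  obtain ⟨e⟩ := h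
  let N : Matrix (Fin 2) (Fin 2) ℚ := !![0, 1; 0, 0]
  have hN : N * N = 0 := by
    ext i j
    fin_cases i <;> fin_cases j <;> simp [N, Matrix.mul_apply]
  have hN0 : N ≠ 0 := fun h0 => by
    have := congrFun (congrFun h0 0) 1
    simp [N] at this
  obtain ⟨q, hq⟩ : ∃ q, q = e.symm N := ⟨_, rfl⟩
  have hqq : q * q = 0 := by rw [hq, ← map_mul, hN, map_zero]
  have hq0 : q ≠ 0 := by rw [hq]; simpa using hN0
  obtain ⟨w, x, y, z⟩ := q
  have h1 := congrArg QuaternionAlgebra.re hqq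
  have h2 := congrArg QuaternionAlgebra.imI hqq
  have h3 := congrArg QuaternionAlgebra.imJ hqq
  have h4 := congrArg QuaternionAlgebra.imK hqq
  simp at h1 h2 h3 h4
  have hw : w = 0 := by
    by_contra hw
    have hx : x = 0 := by
      have : w * x = 0 := by linarith
      simpa [hw] using this
    have hy : y = 0 := by
      have : w * y = 0 := by linarith
      simpa [hw] using this
    have hz : z = 0 := by
      have : w * z = 0 := by linarith
      simpa [hw] using this
    subst hx hy hz
    simp at h1
    exact hw h1
  subst hw
  refine ⟨x, y, z, ?_, by linear_combination h1⟩
  rintro ⟨rfl, rfl, rfl⟩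
  exact hq0 rfl

/-! ### Descent at a ramified prime -/

theorem dvd_of_zero {r : ℕ} (hr : r.Prime) {a c : ℤ} (ha : ¬ IsSquare (a : ZMod r))
    (hc : ¬ (r : ℤ) ∣ c) {x y z : ℤ} (h : a * x ^ 2 + r * c * y ^ 2 - a * (r * c) * z ^ 2 = 0) :
    (r : ℤ) ∣ x ∧ (r : ℤ) ∣ y ∧ (r : ℤ) ∣ z := by
  have : Fact r.Prime := ⟨hr⟩
  have hp : Prime (r : ℤ) := Nat.prime_iff_prime_int.1 hr
  have hra : ¬ (r : ℤ) ∣ a := fun hd => ha (by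
    rw [(ZMod.intCast_zmod_eq_zero_iff_dvd a r).2 hd]; exact IsSquare.zero)
  have hx : (r : ℤ) ∣ x := by
    have : (r : ℤ) ∣ a * x ^ 2 := ⟨a * c * z ^ 2 - c * y ^ 2, by linear_combination h⟩
    exact hp.dvd_of_dvd_pow ((hp.dvd_or_dvd this).resolve_left hra)
  obtain ⟨x', rfl⟩ := hx
  have h' : (r : ℤ) ∣ c * (y ^ 2 - a * z ^ 2) := by
    refine ⟨-(a * x' ^ 2), ?_⟩
    apply mul_left_cancel₀ hp.ne_zero
    linear_combination h
  have h2 := (ZMod.intCast_zmod_eq_zero_iff_dvd _ r).2 ((hp.dvd_or_dvd h').resolve_left hc)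
  push_cast at h2
  have hz : (z : ZMod r) = 0 := by
    by_contra hz
    refine ha ⟨y / z, ?_⟩
    field_simp
    linear_combination -h2
  have hy : (y : ZMod r) = 0 := by
    rw [hz] at h2
    simpa using h2
  exact ⟨dvd_mul_right _ _, (ZMod.intCast_zmod_eq_zero_iff_dvd y r).1 hy,
    (ZMod.intCast_zmod_eq_zero_iff_dvd z r).1 hz⟩

theorem pow_dvd_of_zero {r : ℕ} (hr : r.Prime) {a c : ℤ} (ha : ¬ IsSquare (a : ZMod r))
    (hc : ¬ (r : ℤ) ∣ c) (n : ℕ) : ∀ {x y z : ℤ},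
    a * x ^ 2 + r * c * y ^ 2 - a * (r * c) * z ^ 2 = 0 →
    (r : ℤ) ^ n ∣ x ∧ (r : ℤ) ^ n ∣ y ∧ (r : ℤ) ^ n ∣ z := by
  induction n with
  | zero => intro x y z _; simp
  | succ n ih =>
    intro x y z h
    obtain ⟨⟨x', rfl⟩, ⟨y', rfl⟩, ⟨z', rfl⟩⟩ := dvd_of_zero hr ha hc h
    have hr0 : (r : ℤ) ^ 2 ≠ 0 := pow_ne_zero _ (by exact_mod_cast hr.ne_zero)
    have h' : a * x' ^ 2 + r * c * y' ^ 2 - a * (r * c) * z' ^ 2 = 0 := by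
      apply mul_left_cancel₀ hr0
      linear_combination h
    obtain ⟨h1, h2, h3⟩ := ih h'
    simp only [pow_succ']
    exact ⟨mul_dvd_mul_left _ h1, mul_dvd_mul_left _ h2, mul_dvd_mul_left _ h3⟩

theorem eq_zero_of_forall_pow_dvd {r : ℕ} (hr : r.Prime) {x : ℤ}
    (h : ∀ n : ℕ, (r : ℤ) ^ n ∣ x) : x = 0 := by
  by_contra hx
  have h1 : r ^ x.natAbs ∣ x.natAbs := by
    have := Int.natAbs_dvd_natAbs.2 (h x.natAbs)
    rwa [Int.natAbs_pow, Int.natAbs_natCast] at this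
  have h2 := Nat.le_of_dvd (Int.natAbs_pos.2 hx) h1
  exact absurd (Nat.lt_pow_self hr.one_lt) (not_lt.2 h2)

theorem no_zero_of_not_isSquare {r : ℕ} (hr : r.Prime) {a c : ℤ} (ha : ¬ IsSquare (a : ZMod r))
    (hc : ¬ (r : ℤ) ∣ c) {x y z : ℚ}
    (h : a * x ^ 2 + (r * c) * y ^ 2 - a * (r * c) * z ^ 2 = 0) :
    x = 0 ∧ y = 0 ∧ z = 0 := by
  have hx := Rat.num_div_den x
  have hy := Rat.num_div_den y
  have hz := Rat.num_div_den z
  have dx : (x.den : ℚ) ≠ 0 := by exact_mod_cast x.den_ne_zero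
  have dy : (y.den : ℚ) ≠ 0 := by exact_mod_cast y.den_ne_zero
  have dz : (z.den : ℚ) ≠ 0 := by exact_mod_cast z.den_ne_zero
  have hx' : (x.num : ℚ) = x * x.den := by field_simp at hx; linarith
  have hy' : (y.num : ℚ) = y * y.den := by field_simp at hy; linarith
  have hz' : (z.num : ℚ) = z * z.den := by field_simp at hz; linarith
  have key : a * (x.num * y.den * z.den) ^ 2 + r * c * (y.num * x.den * z.den) ^ 2
      - a * (r * c) * (z.num * x.den * y.den) ^ 2 = 0 := by
    have : (a : ℚ) * (x.num * y.den * z.den) ^ 2 + r * c * (y.num * x.den * z.den) ^ 2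
        - a * (r * c) * (z.num * x.den * y.den) ^ 2 = 0 := by
      rw [hx', hy', hz']
      linear_combination (x.den * y.den * z.den : ℚ) ^ 2 * h
    exact_mod_cast this
  have h1 := eq_zero_of_forall_pow_dvd hr fun n => (pow_dvd_of_zero hr ha hc n key).1
  have h2 := eq_zero_of_forall_pow_dvd hr fun n => (pow_dvd_of_zero hr ha hc n key).2.1
  have h3 := eq_zero_of_forall_pow_dvd hr fun n => (pow_dvd_of_zero hr ha hc n key).2.2
  simpa using And.intro h1 (And.intro h2 h3)

theorem not_quatSplit {r s : ℕ} (hr : r.Prime) (hs : s.Prime) (hrs : r ≠ s) {a : ℕ}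
    (ha : ¬ IsSquare (a : ZMod r)) : ¬ quatSplit a ((r : ℚ) * (s : ℚ)) := by
  intro h
  obtain ⟨x, y, z, hne, h0⟩ := exists_zero_of_quatSplit h
  refine hne (no_zero_of_not_isSquare hr (a := a) (c := s) (by simpa using ha) ?_ ?_)
  · rw [Int.natCast_dvd_natCast, Nat.prime_dvd_prime_iff_eq hr hs]
    exact hrs
  · simpa using h0

/-! ### Legendre's theorem -/

/-- A nonzero vector in the box `|x| ≤ √(ab)`, `|y| ≤ √b`, `|z| ≤ √a` lying on the lattice
`x ≡ t z (mod a)`, `x ≡ w y (mod b)`. -/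
theorem exists_small_vector {a b : ℕ} (ha : 0 < a) (hb : 0 < b) (t : ZMod a) (w : ZMod b) :
    ∃ x y z : ℤ, ¬ (x = 0 ∧ y = 0 ∧ z = 0) ∧ x ^ 2 ≤ a * b ∧ y ^ 2 ≤ b ∧ z ^ 2 ≤ a ∧
      (x : ZMod a) = t * z ∧ (x : ZMod b) = w * y := by
  have : NeZero a := ⟨ha.ne'⟩
  have : NeZero b := ⟨hb.ne'⟩
  let X := Nat.sqrt (a * b)
  let Y := Nat.sqrt b
  let Z := Nat.sqrt a
  let f : Fin (X + 1) × Fin (Y + 1) × Fin (Z + 1) → ZMod a × ZMod b := fun p =>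
    ((p.1 : ℕ) - t * (p.2.2 : ℕ), (p.1 : ℕ) - w * (p.2.1 : ℕ))
  have hcard : Fintype.card (ZMod a × ZMod b) <
      Fintype.card (Fin (X + 1) × Fin (Y + 1) × Fin (Z + 1)) := by
    simp only [Fintype.card_prod, ZMod.card, Fintype.card_fin]
    have hX : a * b < (X + 1) ^ 2 := Nat.lt_succ_sqrt' _
    have hY : b < (Y + 1) ^ 2 := Nat.lt_succ_sqrt' _
    have hZ : a < (Z + 1) ^ 2 := Nat.lt_succ_sqrt' _
    refine lt_of_pow_lt_pow_left₀ 2 (Nat.zero_le _) ?_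
    calc (a * b) ^ 2 = (a * b) * (b * a) := by ring
      _ < (X + 1) ^ 2 * ((Y + 1) ^ 2 * (Z + 1) ^ 2) := by gcongr
      _ = _ := by ring
  obtain ⟨p, q, hpq, hf⟩ := Fintype.exists_ne_map_eq_of_card_lt f hcard
  obtain ⟨x, y, z⟩ := p
  obtain ⟨x', y', z'⟩ := q
  have bound {n : ℕ} (k k' : Fin (Nat.sqrt n + 1)) : ((k : ℤ) - (k' : ℤ)) ^ 2 ≤ n := by
    have h1 : (k : ℤ) ≤ Nat.sqrt n := by exact_mod_cast Nat.lt_succ_iff.1 k.2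
    have h2 : (k' : ℤ) ≤ Nat.sqrt n := by exact_mod_cast Nat.lt_succ_iff.1 k'.2
    have h3 : ((Nat.sqrt n : ℕ) : ℤ) ^ 2 ≤ n := by exact_mod_cast Nat.sqrt_le' n
    refine le_trans (sq_le_sq' ?_ ?_) h3 <;> omega
  simp only [f, Prod.mk.injEq] at hf
  refine ⟨(x : ℤ) - x', (y : ℤ) - y', (z : ℤ) - z', ?_, ?_, bound y y', bound z z', ?_, ?_⟩
  · rintro ⟨h1, h2, h3⟩
    apply hpq
    simp only [Prod.mk.injEq, Fin.ext_iff]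
    omega
  · exact_mod_cast bound x x'
  · push_cast
    linear_combination hf.1
  · push_cast
    linear_combination hf.2

theorem not_isSquare_int {a : ℕ} (ha : ¬ IsSquare a) (x : ℤ) : x ^ 2 ≠ a := fun h =>
  ha ⟨x.natAbs, by zify; rw [← h, ← sq, sq_abs]⟩

theorem legendre_solution {a b : ℕ} (hab : a.Coprime b) (ha : ¬ IsSquare a) (hb : ¬ IsSquare b)
    (hba : IsSquare (b : ZMod a)) (hab' : IsSquare (a : ZMod b)) :
    ∃ x y z : ℤ, ¬ (x = 0 ∧ y = 0 ∧ z = 0) ∧ x ^ 2 = a * y ^ 2 + b * z ^ 2 := by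
  have ha0 : 0 < a := Nat.pos_of_ne_zero fun h => ha (h ▸ IsSquare.zero)
  have hb0 : 0 < b := Nat.pos_of_ne_zero fun h => hb (h ▸ IsSquare.zero)
  obtain ⟨t, ht⟩ := hba
  obtain ⟨w, hw⟩ := hab'
  obtain ⟨x, y, z, hne, hx, hy, hz, h1, h2⟩ := exists_small_vector ha0 hb0 t w
  have ha1 : (0 : ℤ) < a := by exact_mod_cast ha0
  have hb1 : (0 : ℤ) < b := by exact_mod_cast hb0
  have hda : (a : ℤ) ∣ x ^ 2 - a * y ^ 2 - b * z ^ 2 := by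
    rw [← ZMod.intCast_zmod_eq_zero_iff_dvd]
    push_cast
    rw [h1, ht, ZMod.natCast_self]
    ring
  have hdb : (b : ℤ) ∣ x ^ 2 - a * y ^ 2 - b * z ^ 2 := by
    rw [← ZMod.intCast_zmod_eq_zero_iff_dvd]
    push_cast
    rw [h2, hw, ZMod.natCast_self]
    ring
  obtain ⟨m, hm⟩ := (Nat.isCoprime_iff_coprime.2 hab).mul_dvd hda hdb
  have hy' : y ^ 2 < b := lt_of_le_of_ne hy (not_isSquare_int hb y)
  have hz' : z ^ 2 < a := lt_of_le_of_ne hz (not_isSquare_int ha z)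
  have hay : (a : ℤ) * y ^ 2 < a * b := by gcongr
  have hbz : (b : ℤ) * z ^ 2 < a * b := by rw [mul_comm (a : ℤ)]; gcongr
  have hpos : (0 : ℤ) < a * b := mul_pos ha1 hb1
  have hm1 : m ≤ 1 := by
    by_contra! h
    nlinarith [mul_nonneg ha1.le (sq_nonneg y), mul_nonneg hb1.le (sq_nonneg z)]
  have hm2 : -2 < m := by
    by_contra! h
    nlinarith [sq_nonneg x]
  obtain rfl | rfl | rfl : m = 1 ∨ m = 0 ∨ m = -1 := by omega
  · -- Here `x² = ab`, which is impossible as `a` and `b` are coprime non-squares.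
    have hxx : x ^ 2 = a * b := le_antisymm hx
      (by nlinarith [mul_nonneg ha1.le (sq_nonneg y), mul_nonneg hb1.le (sq_nonneg z)])
    obtain ⟨k, hk | hk⟩ := Int.sq_of_gcd_eq_one (by simpa using hab) hxx.symm
    · exact absurd hk.symm (not_isSquare_int ha k)
    · nlinarith [sq_nonneg k]
  · exact ⟨x, y, z, hne, by linarith⟩
  · -- `a (y² - b) = x² - b z²`, so `a (y² - b)²` is a product of two norms from `ℚ(√b)`.
    refine ⟨x * y + b * z, y ^ 2 - b, x + y * z, ?_, by linear_combination (y ^ 2 - b) * hm⟩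
    rintro ⟨-, h, -⟩
    exact not_isSquare_int hb y (by linarith)

theorem quatSplit_of_isSquare {a b : ℕ} (hab : a.Coprime b) (ha : ¬ IsSquare a)
    (hb : ¬ IsSquare b) (hba : IsSquare (b : ZMod a)) (hab' : IsSquare (a : ZMod b)) :
    quatSplit a b := by
  obtain ⟨x, y, z, hne, h⟩ := legendre_solution hab ha hb hba hab'
  have ha0 : a ≠ 0 := fun h => ha (h ▸ IsSquare.zero)
  have hb0 : b ≠ 0 := fun h => hb (h ▸ IsSquare.zero)
  have hz : z ≠ 0 := by
    rintro rfl
    have hQ : (x : ℚ) ^ 2 = a * (y : ℚ) ^ 2 := by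
      have : x ^ 2 = a * y ^ 2 := by linarith
      exact_mod_cast this
    have hy : y = 0 := by
      by_contra hy
      have hyQ : (y : ℚ) ≠ 0 := by exact_mod_cast hy
      refine ha (Rat.isSquare_natCast_iff.1 ⟨x / y, ?_⟩)
      field_simp
      linarith
    subst hy
    have hx : x = 0 := by simpa using h
    exact hne ⟨hx, rfl, rfl⟩
  have hzQ : (z : ℚ) ≠ 0 := by exact_mod_cast hz
  have hQ : (x : ℚ) ^ 2 = a * (y : ℚ) ^ 2 + b * (z : ℚ) ^ 2 := by exact_mod_cast h
  refine quatSplit_of_norm (u := x / z) (v := y / z) (by exact_mod_cast ha0)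
    (by exact_mod_cast hb0) ?_
  field_simp
  linarith

/-! ### Squares modulo the relevant primes -/

theorem isSquare_mul_of_not {p : ℕ} (hp : p.Prime) {x y : ZMod p} (hx : ¬ IsSquare x)
    (hy : ¬ IsSquare y) : IsSquare (x * y) := by
  have : Fact p.Prime := ⟨hp⟩
  have hx0 : x ≠ 0 := fun h => hx (h ▸ IsSquare.zero)
  have hy0 : y ≠ 0 := fun h => hy (h ▸ IsSquare.zero)
  rw [← quadraticChar_one_iff_isSquare (mul_ne_zero hx0 hy0), map_mul,
    quadraticChar_neg_one_iff_not_isSquare.2 hx, quadraticChar_neg_one_iff_not_isSquare.2 hy]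
  norm_num

theorem not_isSquare_mul {p : ℕ} (hp : p.Prime) {x y : ZMod p} (hx : ¬ IsSquare x)
    (hy : IsSquare y) (hy0 : y ≠ 0) : ¬ IsSquare (x * y) := by
  have : Fact p.Prime := ⟨hp⟩
  intro h
  apply hx
  have := h.div hy
  rwa [mul_div_cancel_right₀ _ hy0] at this

theorem isSquare_zmod_mul {m n k : ℕ} (hmn : m.Coprime n) (hm : IsSquare (k : ZMod m))
    (hn : IsSquare (k : ZMod n)) : IsSquare (k : ZMod (m * n)) := by
  obtain ⟨u, hu⟩ := hm
  obtain ⟨v, hv⟩ := hn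
  refine ⟨(ZMod.chineseRemainder hmn).symm (u, v), ?_⟩
  rw [← map_mul, Prod.mk_mul_mk, ← hu, ← hv, RingEquiv.eq_symm_apply, map_natCast]
  rfl

theorem not_isSquare_of_prime_mul {p n : ℕ} (hp : p.Prime) (hn : ¬ p ∣ n) : ¬ IsSquare (p * n) := by
  rintro ⟨k, hk⟩
  have hpk : p ∣ k := by
    have : p ∣ k * k := ⟨n, hk.symm⟩
    exact (hp.dvd_mul.1 this).elim id id
  obtain ⟨l, rfl⟩ := hpk
  refine hn ⟨l * l, Nat.eq_of_mul_eq_mul_left hp.pos ?_⟩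
  rw [hk]
  ring

/-- By quadratic reciprocity, `12505` is a square and `5`, `2501` are non-squares modulo `r`. -/
theorem residues {r : ℕ} (hr : r.Prime) (hr61 : r ≠ 61)
    (h61 : IsSquare (r : ZMod 61)) (h5 : ¬ IsSquare (r : ZMod 5)) (h41 : ¬ IsSquare (r : ZMod 41)) :
    IsSquare ((12505 : ℕ) : ZMod r) ∧ ¬ IsSquare ((5 : ℕ) : ZMod r) ∧
      ¬ IsSquare ((2501 : ℕ) : ZMod r) := by
  -- `17² = 289 = 2 + 7 · 41`
  have h2 : IsSquare ((2 : ℕ) : ZMod 41) := ⟨17, by decide⟩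
  have : Fact r.Prime := ⟨hr⟩
  have : Fact (Nat.Prime 5) := ⟨by norm_num⟩
  have : Fact (Nat.Prime 41) := ⟨by norm_num⟩
  have : Fact (Nat.Prime 61) := ⟨by norm_num⟩
  have hr2 : r ≠ 2 := by
    rintro rfl
    exact h41 h2
  rw [ZMod.exists_sq_eq_prime_iff_of_mod_four_eq_one (by norm_num) hr2] at h5 h41 h61
  have h0 : ((61 : ℕ) : ZMod r) ≠ 0 := by
    rw [Ne, ZMod.natCast_eq_zero_iff, Nat.prime_dvd_prime_iff_eq hr (by norm_num)]
    exact hr61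
  refine ⟨?_, h5, ?_⟩
  · have := (isSquare_mul_of_not hr h5 h41).mul h61
    rwa [← Nat.cast_mul, ← Nat.cast_mul] at this
  · have := not_isSquare_mul hr h41 h61 h0
    rwa [← Nat.cast_mul] at this

/-- for all distinct primes `r, s ∉ {5,41,61}` such that each of `r` and `s`
is a quadratic residue mod 61 and a quadratic non-residue mod 5 and mod 41, one has
`(12505, rs) = 0`, `(5, rs) ≠ 0` and `(2501, rs) ≠ 0` in `Br(ℚ)`, where
`12505 = 5·41·61` and `2501 = 41·61`. -/
theorem stmt19 (r s : ℕ) (hr : r.Prime) (hs : s.Prime) (hrs : r ≠ s)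
    (hr5 : r ≠ 5) (hr41 : r ≠ 41) (hr61 : r ≠ 61)
    (hs5 : s ≠ 5) (hs41 : s ≠ 41) (hs61 : s ≠ 61)
    (hrQR61 : IsSquare (r : ZMod 61)) (hrNR5 : ¬ IsSquare (r : ZMod 5))
    (hrNR41 : ¬ IsSquare (r : ZMod 41))
    (hsQR61 : IsSquare (s : ZMod 61)) (hsNR5 : ¬ IsSquare (s : ZMod 5))
    (hsNR41 : ¬ IsSquare (s : ZMod 41)) :
    quatSplit 12505 ((r : ℚ) * (s : ℚ)) ∧ ¬ quatSplit 5 ((r : ℚ) * (s : ℚ)) ∧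
      ¬ quatSplit 2501 ((r : ℚ) * (s : ℚ)) := by
  obtain ⟨hr1, hr2, hr3⟩ := residues hr hr61 hrQR61 hrNR5 hrNR41
  obtain ⟨hs1, -, -⟩ := residues hs hs61 hsQR61 hsNR5 hsNR41
  have hcop : r.Coprime s := (Nat.coprime_primes hr hs).2 hrs
  have hcop' {p : ℕ} (hp : p.Prime) (h5 : p ≠ 5) (h41 : p ≠ 41) (h61 : p ≠ 61) :
      Nat.Coprime 12505 p := by
    rw [show 12505 = 5 * 41 * 61 by norm_num]
    refine Nat.Coprime.mul_left (Nat.Coprime.mul_left ?_ ?_) ?_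
    · exact (Nat.coprime_primes (by norm_num) hp).2 h5.symm
    · exact (Nat.coprime_primes (by norm_num) hp).2 h41.symm
    · exact (Nat.coprime_primes (by norm_num) hp).2 h61.symm
  have hsq : IsSquare ((r * s : ℕ) : ZMod (5 * 41 * 61)) := by
    refine isSquare_zmod_mul (by norm_num) (isSquare_zmod_mul (by norm_num) ?_ ?_) ?_
    · rw [Nat.cast_mul]
      exact isSquare_mul_of_not (by norm_num) hrNR5 hsNR5
    · rw [Nat.cast_mul]
      exact isSquare_mul_of_not (by norm_num) hrNR41 hsNR41
    · rw [Nat.cast_mul]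
      exact hrQR61.mul hsQR61
  refine ⟨?_, ?_, ?_⟩
  · have := quatSplit_of_isSquare (a := 12505) (b := r * s)
      ((hcop' hr hr5 hr41 hr61).mul_right (hcop' hs hs5 hs41 hs61))
      (not_isSquare_of_prime_mul (p := 5) (n := 2501) (by norm_num) (by norm_num))
      (not_isSquare_of_prime_mul hr fun h => hrs ((Nat.prime_dvd_prime_iff_eq hr hs).1 h))
      hsq (isSquare_zmod_mul hcop hr1 hs1)
    simpa using this
  · simpa using not_quatSplit hr hs hrs hr2
  · simpa using not_quatSplit hr hs hrs hr3
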